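/- For every integer d ≥ 2, there exists a subset of ℕ^d of size d^{d−2}(d^2 + d − 1) + 1 that is not coverable; consequently h(ℕ^d) ≤ d^{d−2}(d^2 + d − 1). -/

import Mathlib

/-- A winning guessing strategy in the hat guessing game on `G` with `q` colors:
each vertex `v` gets a guessing function from colorings of its open neighborhood
to colors, such that for every coloring some vertex guesses its own color. -/
def HatWinning {V : Type*} (G : SimpleGraph V) (q : ℕ) : Prop :=
  ∃ g : (v : V) → ({w : V // G.Adj v w} → Fin q) → Fin q,
    ∀ χ : V → Fin q, ∃ v : V, g v (fun w => χ w.1) = χ v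

/-- The hat guessing number of `G`: the largest number of colors for which the
players have a winning strategy. -/
noncomputable def hatGuessingNumber {V : Type*} (G : SimpleGraph V) : ℕ :=
  sSup {q : ℕ | HatWinning G q}

/-- Sylvester's sequence: `s 0 = 2`, `s (n+1) = s n ^ 2 - s n + 1`. -/
def sylvester : ℕ → ℕ
  | 0 => 2
  | n + 1 => sylvester n ^ 2 - sylvester n + 1

/-- The graph `G_d(N)`: vertices are the vertices of the complete rooted `N`-ary
tree of depth `d` (encoded as lists of child-indices of length at most `d`), and
each vertex is adjacent to all of its ancestors (its proper prefixes). -/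
def ancTree (d N : ℕ) : SimpleGraph {l : List (Fin N) // l.length ≤ d} where
  Adj v w := v ≠ w ∧ (v.1 <+: w.1 ∨ w.1 <+: v.1)
  symm := by
    refine ⟨?_⟩
    intro v w h
    exact ⟨h.1.symm, h.2.symm⟩
  loopless := by
    refine ⟨?_⟩
    intro v h
    exact h.1 rfl

/-- The book graph `B_{d,n}`: a spine of `d` vertices forming a clique, completely
joined to `n` pages forming an independent set. -/
def bookGraph (d n : ℕ) : SimpleGraph (Fin d ⊕ Fin n) where
  Adj x y := x ≠ y ∧ (x.isLeft ∨ y.isLeft)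
  symm := by
    refine ⟨?_⟩
    intro x y h
    exact ⟨h.1.symm, h.2.symm⟩
  loopless := by
    refine ⟨?_⟩
    intro x h
    exact h.1 rfl

/-- A set `S ⊆ ℕ^d` is coverable if it can be partitioned into parts `S_1, …, S_d`
such that `S_i` contains at most one point on every line parallel to the `i`-th
coordinate axis, i.e. two distinct points in part `i` differ in some coordinate
other than the `i`-th. -/
def Coverable {d : ℕ} (S : Set (Fin d → ℕ)) : Prop :=
  ∃ f : (Fin d → ℕ) → Fin d, ∀ x ∈ S, ∀ y ∈ S,
    x ≠ y → f x = f y → ∃ j : Fin d, j ≠ f x ∧ x j ≠ y j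

/-- `hcov d` is `h(ℕ^d)`: the largest `t` such that every `t`-element subset of
`ℕ^d` is coverable. -/
noncomputable def hcov (d : ℕ) : ℕ :=
  sSup {t : ℕ | ∀ S : Set (Fin d → ℕ), S.Finite → S.ncard = t → Coverable S}

/-- `p` is a left-to-right path with `k` edges in a graph on `Fin n` with the
natural vertex ordering: a strictly increasing sequence of `k+1` vertices in which
consecutive vertices are adjacent. -/
def IsLTRPath {n : ℕ} (G : SimpleGraph (Fin n)) (k : ℕ) (p : Fin (k + 1) → Fin n) : Prop :=
  StrictMono p ∧ ∀ i : Fin k, G.Adj (p i.castSucc) (p i.succ)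

/-- The depth of a vertex `v`: the largest number of edges in a left-to-right path
ending at `v`. -/
noncomputable def ltrDepth {n : ℕ} (G : SimpleGraph (Fin n)) (v : Fin n) : ℕ :=
  sSup {k : ℕ | ∃ p : Fin (k + 1) → Fin n, IsLTRPath G k p ∧ p (Fin.last k) = v}

/-- Coverability passes to subsets. -/
theorem Coverable.mono {d : ℕ} {S T : Set (Fin d → ℕ)} (hST : S ⊆ T) (hT : Coverable T) :
    Coverable S := by
  obtain ⟨f, hf⟩ := hT
  exact ⟨f, fun x hx y hy => hf x (hST hx) y (hST hy)⟩

/-- A coverable subset of a box has at most as many points as there are axis-parallel lines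
meeting the box. -/
theorem Coverable.card_le_sum_prod {d : ℕ} {n : Fin d → ℕ} {S : Finset (Fin d → ℕ)}
    (hS : S ⊆ Fintype.piFinset fun j => Finset.range (n j))
    (hc : Coverable (S : Set (Fin d → ℕ))) :
    S.card ≤ ∑ i, ∏ j, if j = i then 1 else n j := by
  obtain ⟨f, hf⟩ := hc
  let L : Finset (Σ _ : Fin d, Fin d → ℕ) := Finset.univ.sigma fun i =>
    Fintype.piFinset fun j => Finset.range (if j = i then 1 else n j)
  have hL : L.card = ∑ i, ∏ j, if j = i then 1 else n j := by
    simp [L, Finset.card_sigma]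
  rw [← hL]
  refine Finset.card_le_card_of_injOn (fun x => ⟨f x, Function.update x (f x) 0⟩) ?_ ?_
  · intro x hx
    have hxn := Fintype.mem_piFinset.1 (hS hx)
    simp only [L, Finset.coe_sigma, Set.mem_sigma_iff, Finset.mem_coe, Finset.mem_univ, true_and,
      Fintype.mem_piFinset]
    intro j
    by_cases hj : j = f x
    · simp [hj]
    · simpa [hj] using hxn j
  · intro x hx y hy hxy
    by_contra hne
    obtain ⟨hfxy, hupd⟩ := Sigma.mk.inj_iff.1 hxy
    obtain ⟨j, hj, hxyj⟩ := hf x hx y hy hne hfxy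
    have := congrFun (eq_of_heq hupd) j
    rw [← hfxy, Function.update_of_ne hj, Function.update_of_ne hj] at this
    exact hxyj this

/-- The number of axis-parallel lines meeting a box with one side `d + 1` and all other sides `d`,
where `d = k + 2` is the dimension. -/
theorem sum_prod_box_lines (k : ℕ) :
    (∑ i : Fin (k + 2), ∏ j : Fin (k + 2),
      if j = i then 1 else (Fin.cons (k + 3) fun _ => k + 2 : Fin (k + 2) → ℕ) j) =
      (k + 2) ^ k * ((k + 2) ^ 2 + (k + 2) - 1) := by
  have hprod (m : Fin (k + 1)) : (∏ j, if j = m then 1 else k + 2) = (k + 2) ^ k := by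
    simp [Finset.prod_ite, Finset.filter_ne']
  have hsub : (k + 2) ^ 2 + (k + 2) - 1 = (k + 2) ^ 2 + k + 1 := by omega
  rw [Fin.sum_univ_succ]
  simp only [Fin.prod_univ_succ (n := k + 1), Fin.cons_zero, Fin.cons_succ, Fin.succ_inj,
    Fin.succ_ne_zero, (Fin.succ_ne_zero _).symm, if_true, if_false, hprod, hsub]
  simp
  ring

/-- There is a non-coverable set with one more point than the number of lines meeting the box. -/
theorem exists_not_coverable (k : ℕ) :
    ∃ S : Finset (Fin (k + 2) → ℕ),
      S.card = (k + 2) ^ k * ((k + 2) ^ 2 + (k + 2) - 1) + 1 ∧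
      ¬ Coverable (S : Set (Fin (k + 2) → ℕ)) := by
  let n : Fin (k + 2) → ℕ := Fin.cons (k + 3) fun _ => k + 2
  have hcard : (k + 2) ^ k * ((k + 2) ^ 2 + (k + 2) - 1) + 1 ≤
      (Fintype.piFinset fun j => Finset.range (n j)).card := by
    have hpos : 0 < (k + 2) ^ k := by positivity
    have hsub : (k + 2) ^ 2 + (k + 2) - 1 = (k + 2) ^ 2 + k + 1 := by omega
    simp only [Fintype.card_piFinset, Finset.card_range, Fin.prod_univ_succ (n := k + 1), n,
      Fin.cons_zero, Fin.cons_succ, Finset.prod_const, Finset.card_univ, Fintype.card_fin, hsub]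
    rw [pow_succ (k + 2) k]
    nlinarith
  obtain ⟨S, hS, hSc⟩ := Finset.exists_subset_card_eq hcard
  refine ⟨S, hSc, fun hc => ?_⟩
  have hle := hc.card_le_sum_prod hS
  rw [sum_prod_box_lines, hSc] at hle
  omega

/-- Upper bound of Lemma 6: for `d ≥ 2` there is a subset of `ℕ^d` of size
`d^(d-2)(d^2+d-1) + 1` that is not coverable; consequently
`h(ℕ^d) ≤ d^(d-2)(d^2+d-1)`. -/
theorem hcov_le (d : ℕ) (hd : 2 ≤ d) :
    (∃ S : Set (Fin d → ℕ), S.Finite ∧ S.ncard = d ^ (d - 2) * (d ^ 2 + d - 1) + 1 ∧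
      ¬ Coverable S) ∧
      hcov d ≤ d ^ (d - 2) * (d ^ 2 + d - 1) := by
  obtain ⟨k, rfl⟩ := Nat.exists_eq_add_of_le' hd
  rw [Nat.add_sub_cancel]
  obtain ⟨S, hSc, hS⟩ := exists_not_coverable k
  have hSn := (Set.ncard_coe_finset S).trans hSc
  refine ⟨⟨S, S.finite_toSet, hSn, hS⟩, csSup_le' fun t ht => ?_⟩
  by_contra! hlt
  obtain ⟨T, hST, -, hT⟩ := Set.infinite_univ.exists_superset_ncard_eq
    (Set.subset_univ (S : Set (Fin (k + 2) → ℕ))) S.finite_toSet (hSn.trans_le hlt)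
  exact hS ((ht T (Set.finite_of_ncard_pos (by omega)) hT).mono hST)
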